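/- The cautious analogue of interpolation between default theories fails: let b and c be distinct propositional variables, W₁ = W₂ = ∅, D₁ = { (⊤ : {b} / b), (⊤ : {¬b} / ¬b) }, and D₂ = { (b : {c} / c), (¬b : {c} / c) }. Then every extension of ⟨∅, D₁ ∪ D₂⟩ contains c (and there is at least one extension), yet there is no formula γ ∈ 𝓛({b}) such that ∅ |~_{D₁} γ and {γ} |~_{D₂} c; indeed every formula γ ∈ 𝓛({b}) with ∅ |~_{D₁} γ is a tautology, and for a tautology γ the theory ⟨{γ}, D₂⟩ does not cautiously entail c. -/

import Mathlib

namespace NMR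

/-- Propositional formulas over a variable type `V`. -/
inductive PropForm (V : Type*) : Type _ where
  | var : V → PropForm V
  | tru : PropForm V
  | fls : PropForm V
  | neg : PropForm V → PropForm V
  | conj : PropForm V → PropForm V → PropForm V
  | disj : PropForm V → PropForm V → PropForm V
  | impl : PropForm V → PropForm V → PropForm V

variable {V : Type*}

/-- Truth value of a formula under a valuation. -/
def PropForm.eval (ν : V → Bool) : PropForm V → Bool
  | .var v => ν v
  | .tru => true
  | .fls => false
  | .neg φ => !(φ.eval ν)
  | .conj φ ψ => φ.eval ν && ψ.eval ν
  | .disj φ ψ => φ.eval ν || ψ.eval ν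
  | .impl φ ψ => !(φ.eval ν) || ψ.eval ν

/-- The set of variables occurring in a formula. -/
def PropForm.vars : PropForm V → Set V
  | .var v => {v}
  | .tru => ∅
  | .fls => ∅
  | .neg φ => φ.vars
  | .conj φ ψ => φ.vars ∪ ψ.vars
  | .disj φ ψ => φ.vars ∪ ψ.vars
  | .impl φ ψ => φ.vars ∪ ψ.vars

/-- `ν ⊨ φ`. -/
def Sat (ν : V → Bool) (φ : PropForm V) : Prop := φ.eval ν = true

/-- `ν ⊨ T` for a set of formulas. -/
def SatSet (ν : V → Bool) (T : Set (PropForm V)) : Prop := ∀ φ ∈ T, Sat ν φ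

/-- `T ⊨ φ`. -/
def Entails (T : Set (PropForm V)) (φ : PropForm V) : Prop :=
  ∀ ν : V → Bool, SatSet ν T → Sat ν φ

/-- `T ⊨ Γ` for a set `Γ`. -/
def EntailsSet (T Γ : Set (PropForm V)) : Prop := ∀ φ ∈ Γ, Entails T φ

/-- A tautology is satisfied by every valuation. -/
def Tautology (φ : PropForm V) : Prop := ∀ ν : V → Bool, Sat ν φ

/-- `L(T)`: the set of variables occurring in a set of formulas. -/
def varsOf (T : Set (PropForm V)) : Set V := ⋃ φ ∈ T, φ.vars

/-- `𝓛(S)`: the set of formulas all of whose variables lie in `S`. -/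
def FormsOver (S : Set V) : Set (PropForm V) := {φ | φ.vars ⊆ S}

/-- `Cn^S(T)`: the formulas in `𝓛(S)` entailed by `T`. -/
def Cn (S : Set V) (T : Set (PropForm V)) : Set (PropForm V) :=
  {φ | φ.vars ⊆ S ∧ Entails T φ}

/-- Two sets of formulas are logically equivalent iff they have the same models. -/
def EquivTheories (T T' : Set (PropForm V)) : Prop :=
  ∀ ν : V → Bool, SatSet ν T ↔ SatSet ν T'

/-- A Reiter default: prerequisite, a finite nonempty set of justifications,
and a consequent. -/
structure Default (V : Type*) where
  pre : PropForm V
  just : Set (PropForm V)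
  just_finite : just.Finite
  just_nonempty : just.Nonempty
  cons : PropForm V

/-- All propositional consequences of `T`. -/
def CnAll (T : Set (PropForm V)) : Set (PropForm V) := {φ | Entails T φ}

/-- The closure conditions defining `Γ(S₀)` for the default theory `⟨W, D⟩`:
`W ⊆ S`, `Cn(S) = S`, and closure under the defaults applicable w.r.t. `S₀`. -/
def DLClosed (W : Set (PropForm V)) (D : Set (Default V)) (S₀ S : Set (PropForm V)) : Prop :=
  W ⊆ S ∧ CnAll S = S ∧
    ∀ d ∈ D, d.pre ∈ S → (∀ β ∈ d.just, PropForm.neg β ∉ S₀) → d.cons ∈ S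

/-- `Γ(S₀)`: the least set satisfying the closure conditions (the intersection
of all such sets, which is itself such a set). -/
def GammaOp (W : Set (PropForm V)) (D : Set (Default V)) (S₀ : Set (PropForm V)) :
    Set (PropForm V) := ⋂₀ {S | DLClosed W D S₀ S}

/-- `E` is an extension of `⟨W, D⟩` iff `Γ(E) = E`. -/
def IsExtension (W : Set (PropForm V)) (D : Set (Default V)) (E : Set (PropForm V)) : Prop :=
  GammaOp W D E = E

/-- Cautious entailment `W |~_D φ`. -/
def Cautious (W : Set (PropForm V)) (D : Set (Default V)) (φ : PropForm V) : Prop :=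
  ∀ E : Set (PropForm V), IsExtension W D E → φ ∈ E

/-- Brave entailment `W |~^b_D φ`. -/
def Brave (W : Set (PropForm V)) (D : Set (Default V)) (φ : PropForm V) : Prop :=
  ∃ E : Set (PropForm V), IsExtension W D E ∧ φ ∈ E

/-- `L(D)`: the variables occurring in prerequisites, justifications or
consequents of defaults in `D`. -/
def varsD (D : Set (Default V)) : Set V :=
  ⋃ d ∈ D, (d.pre.vars ∪ (⋃ β ∈ d.just, PropForm.vars β) ∪ d.cons.vars)

/-- The defaults `(⊤ : {b} / b)` and `(⊤ : {¬b} / ¬b)`. -/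
def counterD₁ (b : V) : Set (Default V) :=
  {⟨PropForm.tru, {PropForm.var b}, Set.finite_singleton _, Set.singleton_nonempty _,
      PropForm.var b⟩,
    ⟨PropForm.tru, {PropForm.neg (PropForm.var b)}, Set.finite_singleton _,
      Set.singleton_nonempty _, PropForm.neg (PropForm.var b)⟩}

/-- The defaults `(b : {c} / c)` and `(¬b : {c} / c)`. -/
def counterD₂ (b c : V) : Set (Default V) :=
  {⟨PropForm.var b, {PropForm.var c}, Set.finite_singleton _, Set.singleton_nonempty _,
      PropForm.var c⟩,
    ⟨PropForm.neg (PropForm.var b), {PropForm.var c}, Set.finite_singleton _,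
      Set.singleton_nonempty _, PropForm.var c⟩}

/-!
Under `D₁` the variable `b` is settled one way or the other, and either way `D₂` yields `c`. What
passes from `D₁` to `D₂` is a disjunction over extensions, and `b ∨ ¬b` is already a tautology: the
extensions `Cn {b}` and `Cn {¬b}` of `D₁` have only tautologies in common, and a tautology triggers
neither default of `D₂`.

For `c` to be obtained from `D₁ ∪ D₂`, no extension may contain `¬c`. If one did, the defaults of
`D₂` would be blocked, so it would be generated by consistent formulas in which `c` does not occur,
and flipping `c` in a model of these refutes `¬c`.
-/

section Semantics

variable {ν μ : V → Bool} {φ ψ γ : PropForm V} {S T : Set (PropForm V)} {v : V}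

@[simp]
theorem sat_var : Sat ν (.var v) ↔ ν v = true := Iff.rfl

@[simp]
theorem sat_tru : Sat ν .tru := rfl

@[simp]
theorem sat_neg : Sat ν φ.neg ↔ ¬Sat ν φ := by
  simp [Sat, PropForm.eval]

@[simp]
theorem satSet_singleton : SatSet ν {φ} ↔ Sat ν φ := by
  simp [SatSet]

theorem SatSet.mono (h : S ⊆ T) (hT : SatSet ν T) : SatSet ν S :=
  fun φ hφ ↦ hT φ (h hφ)

theorem PropForm.eval_congr (h : ∀ v ∈ φ.vars, ν v = μ v) : φ.eval ν = φ.eval μ := by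
  induction φ with
  | var v => exact h v rfl
  | tru | fls => rfl
  | neg φ ih => simp only [eval, ih h]
  | conj φ ψ ihφ ihψ | disj φ ψ ihφ ihψ | impl φ ψ ihφ ihψ =>
    simp only [eval, ihφ fun v hv ↦ h v (.inl hv), ihψ fun v hv ↦ h v (.inr hv)]

theorem SatSet.congr (hT : SatSet ν T) (h : ∀ v ∈ varsOf T, ν v = μ v) : SatSet μ T := by
  intro φ hφ
  have heval : φ.eval ν = φ.eval μ :=
    PropForm.eval_congr fun v hv ↦ h v (Set.mem_biUnion hφ hv)
  exact heval.symm.trans (hT φ hφ)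

theorem not_entails_neg_var (hT : ∃ ν, SatSet ν T) (hv : v ∉ varsOf T) :
    ¬Entails T (.neg (.var v)) := by
  classical
  obtain ⟨ν, hν⟩ := hT
  intro h
  have hflip : SatSet (Function.update ν v true) T :=
    hν.congr fun w hw ↦ (Function.update_of_ne (ne_of_mem_of_not_mem hw hv) ..).symm
  simpa using h _ hflip

theorem not_tautology_var : ¬Tautology (.var v) :=
  fun h ↦ by simpa using h fun _ ↦ false

theorem not_tautology_neg_var : ¬Tautology (.neg (.var v)) :=
  fun h ↦ by simpa using h fun _ ↦ true

theorem Tautology.entails_singleton_iff (hγ : Tautology γ) : Entails {γ} φ ↔ Tautology φ :=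
  ⟨fun h ν ↦ h ν (satSet_singleton.2 (hγ ν)), fun h ν _ ↦ h ν⟩

theorem subset_cnAll : T ⊆ CnAll T :=
  fun φ hφ _ hν ↦ hν φ hφ

theorem satSet_cnAll : SatSet ν (CnAll T) ↔ SatSet ν T :=
  ⟨.mono subset_cnAll, fun hν _ hφ ↦ hφ ν hν⟩

theorem cnAll_cnAll : CnAll (CnAll T) = CnAll T :=
  Set.ext fun _ ↦ forall_congr' fun _ ↦ imp_congr_left satSet_cnAll

theorem cnAll_subset (hS : CnAll S = S) (h : T ⊆ S) : CnAll T ⊆ S := by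
  rw [← hS]
  exact fun φ hφ ν hν ↦ hφ ν (hν.mono h)

theorem neg_notMem_cnAll : φ.neg ∉ CnAll T ↔ ∃ ν, SatSet ν T ∧ Sat ν φ := by
  simp [CnAll, Entails]

theorem tru_mem (hS : CnAll S = S) : .tru ∈ S :=
  hS ▸ fun _ _ ↦ sat_tru

theorem neg_neg_mem (hS : CnAll S = S) (h : φ ∈ S) : φ.neg.neg ∈ S :=
  cnAll_subset hS (Set.singleton_subset_iff.2 h) fun ν hν ↦ by simpa using hν

end Semantics

section Extensions

variable {W E S T S₀ : Set (PropForm V)} {D : Set (Default V)} {v : V}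

/-- Reiter's set `GD(E, D)` of generating defaults: those whose prerequisite lies in `E` and whose
justifications are each consistent with the deductively closed set `E`. -/
def generatingDefaults (D : Set (Default V)) (E : Set (PropForm V)) : Set (Default V) :=
  {d ∈ D | d.pre ∈ E ∧ ∀ β ∈ d.just, β.neg ∉ E}

theorem dlClosed_gammaOp : DLClosed W D S₀ (GammaOp W D S₀) := by
  refine ⟨fun φ hφ S hS ↦ hS.1 hφ, subset_cnAll.antisymm' ?_,
    fun d hd hpre hjust S hS ↦ hS.2.2 d hd (hpre S hS) hjust⟩
  exact fun φ hφ S hS ↦ cnAll_subset hS.2.1 (Set.sInter_subset_of_mem hS) hφ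

theorem IsExtension.dlClosed (hE : IsExtension W D E) : DLClosed W D E E := by
  have h : DLClosed W D E (GammaOp W D E) := dlClosed_gammaOp
  rwa [hE] at h

theorem IsExtension.subset (hE : IsExtension W D E) (hS : DLClosed W D E S) : E ⊆ S :=
  hE.symm.subset.trans (Set.sInter_subset_of_mem hS)

theorem isExtension_cnAll (hW : W ⊆ CnAll T)
    (hD : ∀ d ∈ generatingDefaults D (CnAll T), d.cons ∈ CnAll T)
    (hT : ∀ S, DLClosed W D (CnAll T) S → T ⊆ S) : IsExtension W D (CnAll T) := by
  refine Set.Subset.antisymm (Set.sInter_subset_of_mem ?_) ?_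
  · exact ⟨hW, cnAll_cnAll, fun d hd hpre hjust ↦ hD d ⟨hd, hpre, hjust⟩⟩
  · exact Set.subset_sInter fun S hS ↦ cnAll_subset hS.2.1 (hT S hS)

theorem isExtension_cnAll_of_generatingDefaults_eq_empty
    (h : generatingDefaults D (CnAll W) = ∅) : IsExtension W D (CnAll W) :=
  isExtension_cnAll subset_cnAll (by simp [h]) fun _ hS ↦ hS.1

theorem IsExtension.eq_cnAll (hE : IsExtension W D E) :
    E = CnAll (W ∪ Default.cons '' generatingDefaults D E) := by
  obtain ⟨hW, hcn, hD⟩ := hE.dlClosed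
  have hle : CnAll (W ∪ Default.cons '' generatingDefaults D E) ⊆ E := by
    refine cnAll_subset hcn (Set.union_subset hW ?_)
    rintro _ ⟨d, ⟨hd, hpre, hjust⟩, rfl⟩
    exact hD d hd hpre hjust
  refine (hE.subset ⟨?_, cnAll_cnAll, fun d hd hpre hjust ↦ ?_⟩).antisymm hle
  · exact Set.subset_union_left.trans subset_cnAll
  · exact subset_cnAll (.inr ⟨d, ⟨hd, hle hpre, hjust⟩, rfl⟩)

/- In an inconsistent extension every justification is refuted, so nothing is generated beyond the
consequences of `W`. -/
theorem IsExtension.exists_satSet (hE : IsExtension W D E) (hW : ∃ ν, SatSet ν W) :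
    ∃ ν, SatSet ν E := by
  by_contra! hunsat
  have hmem (φ : PropForm V) : φ ∈ E := by
    rw [← hE.dlClosed.2.1]
    exact fun ν hν ↦ (hunsat ν hν).elim
  have hblocked : generatingDefaults D E = ∅ := by
    refine Set.eq_empty_of_forall_notMem fun d hd ↦ ?_
    obtain ⟨β, hβ⟩ := d.just_nonempty
    exact hd.2.2 β hβ (hmem _)
  obtain ⟨ν, hν⟩ := hW
  have hE_eq : E = CnAll W := by simpa [hblocked] using hE.eq_cnAll
  exact hunsat ν (hE_eq ▸ satSet_cnAll.2 hν)

theorem IsExtension.neg_var_notMem (hE : IsExtension W D E) (hW : ∃ ν, SatSet ν W)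
    (hvW : v ∉ varsOf W) (hvD : ∀ d ∈ D, v ∈ d.cons.vars → .var v ∈ d.just) :
    .neg (.var v) ∉ E := by
  intro hneg
  have hsat : ∃ ν, SatSet ν (W ∪ Default.cons '' generatingDefaults D E) := by
    obtain ⟨ν, hν⟩ := hE.exists_satSet hW
    exact ⟨ν, satSet_cnAll.1 (hE.eq_cnAll ▸ hν)⟩
  refine not_entails_neg_var hsat (v := v) ?_ (hE.eq_cnAll.subset hneg)
  intro hv
  obtain ⟨φ, hφ | ⟨d, ⟨hd, -, hjust⟩, rfl⟩, hvφ⟩ := Set.mem_iUnion₂.1 hv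
  · exact hvW (Set.mem_biUnion hφ hvφ)
  · exact hjust _ (hvD d hd hvφ) hneg

/-- The prerequisite-free normal default `(⊤ : {φ} / φ)`, which assumes `φ` whenever this is
consistent. -/
def Default.supernormal (φ : PropForm V) : Default V :=
  ⟨.tru, {φ}, Set.finite_singleton φ, Set.singleton_nonempty φ, φ⟩

theorem DLClosed.mem_of_supernormal_mem {φ : PropForm V} (hS : DLClosed W D S₀ S)
    (hφ : .supernormal φ ∈ D) (h : φ.neg ∉ S₀) : φ ∈ S :=
  hS.2.2 _ hφ (tru_mem hS.2.1) (by simpa [Default.supernormal] using h)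

theorem isExtension_pair_supernormal {φ ψ : PropForm V} (hφ : ∃ ν, Sat ν φ)
    (hψ : Entails {φ} ψ.neg) : IsExtension ∅ {.supernormal φ, .supernormal ψ} (CnAll {φ}) := by
  refine isExtension_cnAll (Set.empty_subset _) ?_ fun S hS ↦ ?_
  · rintro d ⟨rfl | rfl, -, hjust⟩
    · exact subset_cnAll rfl
    · exact absurd hψ (hjust ψ rfl)
  · have hconsistent : φ.neg ∉ CnAll {φ} := neg_notMem_cnAll.2 (by simpa using hφ)
    exact Set.singleton_subset_iff.2 (hS.mem_of_supernormal_mem (.inl rfl) hconsistent)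

end Extensions

section Counterexample

variable {W : Set (PropForm V)} {b c : V} {γ : PropForm V}

theorem counterD₁_eq_pair : counterD₁ b = {.supernormal (.var b), .supernormal (.neg (.var b))} :=
  rfl

theorem isExtension_counterD₁_var : IsExtension ∅ (counterD₁ b) (CnAll {.var b}) := by
  rw [counterD₁_eq_pair]
  refine isExtension_pair_supernormal ⟨fun _ ↦ true, rfl⟩ fun ν hν ↦ ?_
  simpa using hν

theorem isExtension_counterD₁_neg_var :
    IsExtension ∅ (counterD₁ b) (CnAll {.neg (.var b)}) := by
  rw [counterD₁_eq_pair, Set.pair_comm]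
  exact isExtension_pair_supernormal ⟨fun _ ↦ false, rfl⟩ fun ν hν ↦ satSet_singleton.1 hν

theorem tautology_of_cautious_counterD₁ (h : Cautious ∅ (counterD₁ b) γ) : Tautology γ := by
  intro ν
  by_cases hν : Sat ν (.var b)
  · exact h _ isExtension_counterD₁_var ν (satSet_singleton.2 hν)
  · exact h _ isExtension_counterD₁_neg_var ν (satSet_singleton.2 (sat_neg.2 hν))

theorem not_cautious_counterD₂ (hb : ¬Entails W (.var b)) (hnb : ¬Entails W (.neg (.var b)))
    (hc : ¬Entails W (.var c)) : ¬Cautious W (counterD₂ b c) (.var c) := by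
  intro h
  refine hc (h _ (isExtension_cnAll_of_generatingDefaults_eq_empty ?_))
  refine Set.eq_empty_of_forall_notMem ?_
  rintro d ⟨rfl | rfl, hpre, -⟩
  · exact hb hpre
  · exact hnb hpre

theorem Tautology.not_cautious_counterD₂ (hγ : Tautology γ) :
    ¬Cautious {γ} (counterD₂ b c) (.var c) :=
  NMR.not_cautious_counterD₂ (mt hγ.entails_singleton_iff.1 not_tautology_var)
    (mt hγ.entails_singleton_iff.1 not_tautology_neg_var)
    (mt hγ.entails_singleton_iff.1 not_tautology_var)

theorem cautious_counterD₁_union_counterD₂ (hW : ∃ ν, SatSet ν W) (hcW : c ∉ varsOf W)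
    (hbc : b ≠ c) : Cautious W (counterD₁ b ∪ counterD₂ b c) (.var c) := by
  intro E hE
  have hnc : .neg (.var c) ∉ E := by
    refine hE.neg_var_notMem hW hcW ?_
    rintro d ((rfl | rfl) | (rfl | rfl)) hcons
    · exact absurd hcons hbc.symm
    · exact absurd hcons hbc.symm
    · rfl
    · rfl
  have hjust : ∀ β ∈ ({.var c} : Set (PropForm V)), β.neg ∉ E := by simpa using hnc
  have hD := hE.dlClosed.2.2
  by_cases hnb : .neg (.var b) ∈ E
  · exact hD _ (.inr (.inr rfl)) hnb hjust
  · have hb : .var b ∈ E := hE.dlClosed.mem_of_supernormal_mem (.inl (.inl rfl)) hnb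
    exact hD _ (.inr (.inl rfl)) hb hjust

theorem isExtension_counterD₁_union_counterD₂ :
    IsExtension ∅ (counterD₁ b ∪ counterD₂ b c) (CnAll {.var b, .var c}) := by
  have hb : .var b ∈ CnAll {.var b, .var c} := subset_cnAll (.inl rfl)
  have hc : .var c ∈ CnAll {.var b, .var c} := subset_cnAll (.inr rfl)
  refine isExtension_cnAll (Set.empty_subset _) ?_ fun S hS ↦ ?_
  · rintro d ⟨(rfl | rfl) | (rfl | rfl), -, hjust⟩
    · exact hb
    · exact absurd (neg_neg_mem cnAll_cnAll hb) (hjust _ rfl)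
    · exact hc
    · exact hc
  · have hconsistent : ∀ v, .neg (.var v) ∉ CnAll {.var b, .var c} := fun v ↦
      neg_notMem_cnAll.2 ⟨fun _ ↦ true, by simp [SatSet], rfl⟩
    have hbS : .var b ∈ S := hS.mem_of_supernormal_mem (.inl (.inl rfl)) (hconsistent b)
    have hcS : .var c ∈ S :=
      hS.2.2 _ (.inr (.inl rfl)) hbS (by simpa using hconsistent c)
    exact Set.pair_subset hbS hcS

end Counterexample

theorem cautious_interpolation_fails_general (b c : V) (hbc : b ≠ c) :
    Cautious (∅ : Set (PropForm V)) (counterD₁ b ∪ counterD₂ b c) (PropForm.var c) ∧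
    (∃ E : Set (PropForm V),
      IsExtension (∅ : Set (PropForm V)) (counterD₁ b ∪ counterD₂ b c) E) ∧
    (∀ γ : PropForm V, Cautious (∅ : Set (PropForm V)) (counterD₁ b) γ → Tautology γ) ∧
    (∀ γ : PropForm V, Tautology γ →
      ¬ Cautious {γ} (counterD₂ b c) (PropForm.var c)) ∧
    ¬ ∃ γ : PropForm V, Cautious (∅ : Set (PropForm V)) (counterD₁ b) γ ∧
        Cautious {γ} (counterD₂ b c) (PropForm.var c) := by
  have hsat : ∃ ν, SatSet ν (∅ : Set (PropForm V)) := ⟨fun _ ↦ true, by simp [SatSet]⟩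
  refine ⟨cautious_counterD₁_union_counterD₂ hsat (by simp [varsOf]) hbc,
    ⟨_, isExtension_counterD₁_union_counterD₂⟩, fun _ ↦ tautology_of_cautious_counterD₁,
    fun _ ↦ Tautology.not_cautious_counterD₂, ?_⟩
  rintro ⟨γ, h₁, h₂⟩
  exact (tautology_of_cautious_counterD₁ h₁).not_cautious_counterD₂ h₂

/-- the cautious analogue of interpolation between default
theories fails. -/
theorem cautious_interpolation_fails {V : Type*} [Finite V] (b c : V) (hbc : b ≠ c) :
    Cautious (∅ : Set (PropForm V)) (counterD₁ b ∪ counterD₂ b c) (PropForm.var c) ∧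
    (∃ E : Set (PropForm V),
      IsExtension (∅ : Set (PropForm V)) (counterD₁ b ∪ counterD₂ b c) E) ∧
    (∀ γ : PropForm V, γ.vars ⊆ {b} →
      Cautious (∅ : Set (PropForm V)) (counterD₁ b) γ → Tautology γ) ∧
    (∀ γ : PropForm V, Tautology γ →
      ¬ Cautious {γ} (counterD₂ b c) (PropForm.var c)) ∧
    ¬ ∃ γ : PropForm V, γ.vars ⊆ {b} ∧
        Cautious (∅ : Set (PropForm V)) (counterD₁ b) γ ∧
        Cautious {γ} (counterD₂ b c) (PropForm.var c) := by
  obtain ⟨hcautious, hext, htaut, hnot, hinterp⟩ := cautious_interpolation_fails_general b c hbc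
  exact ⟨hcautious, hext, fun γ _ ↦ htaut γ, hnot, fun ⟨γ, _, hγ⟩ ↦ hinterp ⟨γ, hγ⟩⟩

end NMR
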